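/- arXiv:2512.19281 — 2 statements merged into one kernel-verified Lean document; each statement's English description precedes it below -/
import Mathlib

section
/- Let Ω ⊂ ℝ² be a bounded domain with smooth boundary, let ν > 0 and let f : Ω → ℝ be smooth. Suppose (u, ρ, P) is a smooth steady-state solution of the inhomogeneous Navier–Stokes system, i.e. ρ (u·∇)u = ν Δu − ∇P − ρ ∇f, (u·∇)ρ = 0 and ∇·u = 0 in Ω, with the no-slip boundary condition u = 0 on ∂Ω, and with u, ρ, P having enough integrability for the energy computations (finite energy). Then u ≡ 0 in Ω and the hydrostatic balance ∇P = −ρ ∇f holds in Ω. -/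
/-!
The proof is the energy identity. Testing the momentum equation with `u` and using
`∇·u = 0`, `u·∇ρ = 0`, one finds that on `Ω` the vector field
`W = ν ∇(|u|²/2) - (ρ|u|²/2 + P + ρ f) u` has divergence exactly `ν |∇u|²`
(`fderiv_energyFlux` and the computation in the theorem). Since `W` vanishes on `∂Ω`, the
divergence integrates to zero, so `∇u = 0` on `Ω`; joining each point to a nearest boundary point
gives `u = 0`, and the momentum equation reduces to the hydrostatic balance.

The version of the divergence theorem needed here is `setIntegral_fderiv_eq_zero`: a `C¹` function
vanishing on `∂Ω`, extended by zero outside `Ω`, is Lipschitz with compact support, so its line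
derivatives (which exist almost everywhere) have integral zero. The smoothness of `∂Ω` enters only
through its being Lebesgue-null (`volume_frontier_eq_zero`).
-/

open MeasureTheory Real Filter Topology Set
open scoped RealInnerProductSpace

noncomputable section

/-- The plane `ℝ²`. -/
abbrev E2 := EuclideanSpace ℝ (Fin 2)

/-- Divergence of a vector field on `ℝ²`. -/
def vdiv (u : E2 → E2) (x : E2) : ℝ :=
  ∑ i : Fin 2, fderiv ℝ u x (EuclideanSpace.single i 1) i

/-- Componentwise Laplacian of a vector field on `ℝ²`. -/
def vlap (u : E2 → E2) (x : E2) : E2 :=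
  ∑ j : Fin 2, fderiv ℝ (fun y => fderiv ℝ u y (EuclideanSpace.single j 1)) x
    (EuclideanSpace.single j 1)

/-- `Ω` is a bounded domain in `ℝ²` with smooth boundary. -/
def SmoothBoundedDomain (Ω : Set E2) : Prop :=
  IsOpen Ω ∧ Bornology.IsBounded Ω ∧ Ω.Nonempty ∧
    ∃ φ : E2 → ℝ, ContDiff ℝ (⊤ : ℕ∞) φ ∧ Ω = {x | φ x < 0} ∧
      ∀ x ∈ frontier Ω, fderiv ℝ φ x ≠ 0

/-- Membership in the Sobolev space `H^k(Ω)` (square-integrable derivatives up to order `k`). -/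
def MemHk {F : Type*} [NormedAddCommGroup F] [NormedSpace ℝ F]
    (k : ℕ) (Ω : Set E2) (g : E2 → F) : Prop :=
  ∀ j : ℕ, j ≤ k → IntegrableOn (fun x => ‖iteratedFDeriv ℝ j g x‖ ^ 2) Ω

/-- Joint smoothness of a solution `(u, ϱ, P)` of the system. -/
def SmoothSol (u : ℝ → E2 → E2) (ϱ P : ℝ → E2 → ℝ) : Prop :=
  ContDiff ℝ (⊤ : ℕ∞) (fun p : ℝ × E2 => u p.1 p.2) ∧
    ContDiff ℝ (⊤ : ℕ∞) (fun p : ℝ × E2 => ϱ p.1 p.2) ∧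
    ContDiff ℝ (⊤ : ℕ∞) (fun p : ℝ × E2 => P p.1 p.2)

/-- `ρ_s` is a steady hydrostatic density profile: there is a pressure `p_s` with
`∇p_s = −ρ_s ∇f` on `Ω`. -/
def Hydrostatic (Ω : Set E2) (f ρs : E2 → ℝ) : Prop :=
  ∃ ps : E2 → ℝ, ContDiff ℝ (⊤ : ℕ∞) ps ∧ ∀ x ∈ Ω, gradient ps x = -(ρs x • gradient f x)

/-- The 2D inhomogeneous incompressible Navier–Stokes perturbation system on `Ω`:
`(ϱ+ρ_s) ∂_t u + (ϱ+ρ_s)(u·∇)u = ν Δu − ∇P − ϱ ∇f`, `∂_t ϱ + u·∇ϱ + u·∇ρ_s = 0`,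
`∇·u = 0`, with the no-slip boundary condition `u|_{∂Ω} = 0`. -/
def PerturbationSystem (Ω : Set E2) (ν : ℝ) (f ρs : E2 → ℝ)
    (u : ℝ → E2 → E2) (ϱ P : ℝ → E2 → ℝ) : Prop :=
  (∀ t ∈ Ici (0:ℝ), ∀ x ∈ Ω,
    (ϱ t x + ρs x) • deriv (fun s => u s x) t
        + (ϱ t x + ρs x) • fderiv ℝ (u t) x (u t x)
      = ν • vlap (u t) x - gradient (P t) x - ϱ t x • gradient f x) ∧
  (∀ t ∈ Ici (0:ℝ), ∀ x ∈ Ω,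
    deriv (fun s => ϱ s x) t + fderiv ℝ (ϱ t) x (u t x) + fderiv ℝ ρs x (u t x) = 0) ∧
  (∀ t ∈ Ici (0:ℝ), ∀ x ∈ Ω, vdiv (u t) x = 0) ∧
  (∀ t ∈ Ici (0:ℝ), ∀ x ∈ frontier Ω, u t x = 0)

/-- `∇f ∈ W^{1,∞}(Ω)`. -/
def GradfW1inf (Ω : Set E2) (f : E2 → ℝ) : Prop :=
  ∃ M : ℝ, ∀ x ∈ Ω, ‖gradient f x‖ ≤ M ∧ ‖iteratedFDeriv ℝ 2 f x‖ ≤ M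

/-- `f ∈ W^{2,∞}(Ω)`. -/
def fW2inf (Ω : Set E2) (f : E2 → ℝ) : Prop :=
  ∃ M : ℝ, ∀ x ∈ Ω, |f x| ≤ M ∧ ‖gradient f x‖ ≤ M ∧ ‖iteratedFDeriv ℝ 2 f x‖ ≤ M

/-- The boundary is null: at almost every point of the zero set of a `C¹` function its derivative
vanishes, whereas the defining function of `Ω` has nonzero derivative on the boundary. -/
lemma volume_frontier_eq_zero {Ω : Set E2} (hΩ : SmoothBoundedDomain Ω) :
    volume (frontier Ω) = 0 := by
  obtain ⟨-, -, -, φ, hφ, hΩφ, hne⟩ := hΩ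
  have hz : ∀ x ∈ frontier Ω, φ x = 0 := by
    intro x hx
    rw [hΩφ] at hx
    exact frontier_lt_subset_eq hφ.continuous continuous_const hx
  -- `ApproximatesLinearOn.norm_fderiv_sub_le` concerns self-maps, so `φ` is multiplied by a
  -- fixed nonzero vector.
  let e : E2 := EuclideanSpace.single 0 1
  have happ : ApproximatesLinearOn (fun x => φ x • e) (0 : E2 →L[ℝ] E2) (frontier Ω) 0 := by
    intro x hx y hy
    simp [hz x hx, hz y hy]
  have hae := happ.norm_fderiv_sub_le volume isClosed_frontier.measurableSet
    (fun x => (fderiv ℝ φ x).smulRight e)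
    (fun x _ => (((hφ.differentiable (by simp)) x).hasFDerivAt.smul_const e).hasFDerivWithinAt)
  have hfalse : ∀ᵐ x ∂(volume.restrict (frontier Ω)), False := by
    filter_upwards [hae, ae_restrict_mem isClosed_frontier.measurableSet] with x hx hxf
    apply hne x hxf
    have h0 : fderiv ℝ φ x = 0 ∨ e = 0 := by simpa using hx
    exact h0.resolve_right (by simp [e])
  simpa [ae_iff, Measure.restrict_apply] using hfalse

/-- Divergence theorem for functions vanishing on the boundary. -/
lemma setIntegral_fderiv_eq_zero {Ω : Set E2} (hΩ : SmoothBoundedDomain Ω)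
    {g : E2 → ℝ} (hg : ContDiff ℝ 1 g) (hg0 : ∀ x ∈ frontier Ω, g x = 0) (v : E2) :
    ∫ x in Ω, fderiv ℝ g x v = 0 := by
  have hnull := volume_frontier_eq_zero hΩ
  have hopen := hΩ.1
  have hbdd := hΩ.2.1
  have hdiff : Differentiable ℝ g := hg.differentiable one_ne_zero
  have hcompact : IsCompact (closure Ω) := hbdd.isCompact_closure
  have hΩuniv : Ω ≠ univ := by
    rintro rfl
    exact NormedSpace.unbounded_univ ℝ E2 hbdd
  obtain ⟨R, hR⟩ := hcompact.isBounded.subset_closedBall (0 : E2)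
  obtain ⟨K, hK⟩ := (isCompact_closedBall (0 : E2) R).exists_bound_of_continuousOn
    (hg.continuous_fderiv one_ne_zero).continuousOn
  have hlip : LipschitzOnWith K.toNNReal g (Metric.closedBall 0 R) :=
    (convex_closedBall (0 : E2) R).lipschitzOnWith_of_nnnorm_fderiv_le
      (fun x _ => hdiff x) (fun x hx => by
        rw [← NNReal.coe_le_coe, coe_nnnorm]
        exact (hK x hx).trans (Real.le_coe_toNNReal K))
  set G : E2 → ℝ := Ω.indicator g with hG
  -- A point of `Ω` and a point outside are compared through a boundary point nearest to the first.
  have hcross : ∀ x ∈ Ω, ∀ y ∉ Ω, dist (g x) 0 ≤ K.toNNReal * dist x y := by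
    intro x hx y hy
    obtain ⟨z, hz, hzd⟩ := exists_mem_frontier_infDist_compl_eq_dist hx hΩuniv
    rw [← hg0 z hz]
    refine (hlip.dist_le_mul x (hR (subset_closure hx)) z (hR (frontier_subset_closure hz))).trans ?_
    gcongr
    rw [← hzd]
    exact Metric.infDist_le_dist_of_mem hy
  have hGlip : LipschitzWith K.toNNReal G := by
    refine LipschitzWith.of_dist_le_mul fun x y => ?_
    by_cases hx : x ∈ Ω <;> by_cases hy : y ∈ Ω
    · simpa [hG, hx, hy] using
        hlip.dist_le_mul x (hR (subset_closure hx)) y (hR (subset_closure hy))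
    · simpa [hG, hx, hy] using hcross x hx y hy
    · simpa [hG, hx, hy, dist_comm] using hcross y hy x hx
    · simp only [hG, hx, hy, not_false_eq_true, indicator_of_notMem, dist_self]
      positivity
  have hGsupp : HasCompactSupport G := by
    refine HasCompactSupport.intro hcompact fun x hx => ?_
    exact indicator_of_notMem (fun h => hx (subset_closure h)) _
  have key := LipschitzWith.integral_lineDeriv_mul_eq (μ := volume)
    (LipschitzWith.const (1 : ℝ) : LipschitzWith 0 (fun _ : E2 => (1 : ℝ))) hGlip hGsupp (-v)
  have hconst : ∀ (c : ℝ) (x w : E2), lineDeriv ℝ (fun _ => c) x w = 0 := fun c x w => by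
    simp [lineDeriv]
  simp only [hconst, zero_mul, integral_zero, neg_neg, mul_one] at key
  rw [← integral_indicator hopen.measurableSet, key]
  refine integral_congr_ae ?_
  have hnf : ∀ᵐ x ∂(volume : Measure E2), x ∉ frontier Ω := by
    rw [ae_iff]
    simpa using hnull
  filter_upwards [hnf] with x hx
  by_cases hxΩ : x ∈ Ω
  · have hloc : G =ᶠ[𝓝 x] g := by
      filter_upwards [hopen.mem_nhds hxΩ] with y hy
      simp [hG, hy]
    rw [indicator_of_mem hxΩ, hloc.lineDeriv_eq, (hdiff x).lineDeriv_eq_fderiv]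
  · have hxc : x ∉ closure Ω := by
      intro h
      exact hx ⟨h, fun h' => hxΩ (interior_subset h')⟩
    have hloc : G =ᶠ[𝓝 x] fun _ => (0 : ℝ) := by
      filter_upwards [isClosed_closure.isOpen_compl.mem_nhds hxc] with y hy
      exact indicator_of_notMem (fun h => hy (subset_closure h)) _
    rw [indicator_of_notMem hxΩ, hloc.lineDeriv_eq, hconst]

lemma gradient_apply_eq (p : E2 → ℝ) (x : E2) (i : Fin 2) :
    gradient p x i = fderiv ℝ p x (EuclideanSpace.single i 1) := by
  rw [← inner_gradient_left, EuclideanSpace.inner_single_right]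
  simp

lemma clm_apply_eq_sum {F : Type*} [NormedAddCommGroup F] [NormedSpace ℝ F]
    (L : E2 →L[ℝ] F) (w : E2) :
    L w = w 0 • L (EuclideanSpace.single 0 1) + w 1 • L (EuclideanSpace.single 1 1) := by
  have hw : w = w 0 • EuclideanSpace.single (0 : Fin 2) (1 : ℝ)
      + w 1 • EuclideanSpace.single (1 : Fin 2) (1 : ℝ) := by
    ext i
    fin_cases i <;> simp
  conv_lhs => rw [hw]
  simp only [map_add, map_smul]

/-- The `i`-th component of the energy flux `ν ∇(|u|²/2) - (ρ|u|²/2 + P + ρ f) u`. -/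
def energyFlux (ν : ℝ) (f : E2 → ℝ) (u : E2 → E2) (ρ P : E2 → ℝ) (i : Fin 2) (x : E2) : ℝ :=
  ν * (fderiv ℝ u x (EuclideanSpace.single i 1) 0 * u x 0
      + fderiv ℝ u x (EuclideanSpace.single i 1) 1 * u x 1)
    - (ρ x * ((u x 0 * u x 0 + u x 1 * u x 1) / 2) + P x + ρ x * f x) * u x i

section Flux

variable {ν : ℝ} {f : E2 → ℝ} {u : E2 → E2} {ρ P : E2 → ℝ}

lemma contDiff_fderiv_apply (hu : ContDiff ℝ (⊤ : ℕ∞) u) (v : E2) :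
    ContDiff ℝ 1 (fun y => fderiv ℝ u y v) :=
  (hu.fderiv_right (m := 1) (by norm_cast)).clm_apply contDiff_const

lemma contDiff_energyFlux (hf : ContDiff ℝ (⊤ : ℕ∞) f) (hu : ContDiff ℝ (⊤ : ℕ∞) u)
    (hρ : ContDiff ℝ (⊤ : ℕ∞) ρ) (hP : ContDiff ℝ (⊤ : ℕ∞) P) (i : Fin 2) :
    ContDiff ℝ 1 (energyFlux ν f u ρ P i) := by
  have h1 : (1 : WithTop ℕ∞) ≤ ((⊤ : ℕ∞) : WithTop ℕ∞) := by norm_cast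
  have hD := contDiff_euclidean.1 (contDiff_fderiv_apply hu (EuclideanSpace.single i 1))
  have hc := contDiff_euclidean.1 (hu.of_le h1)
  have hf1 := hf.of_le h1
  have hρ1 := hρ.of_le h1
  have hP1 := hP.of_le h1
  unfold energyFlux
  exact (contDiff_const.mul (((hD 0).mul (hc 0)).add ((hD 1).mul (hc 1)))).sub
    ((((hρ1.mul ((((hc 0).mul (hc 0)).add ((hc 1).mul (hc 1))).div_const 2)).add hP1).add
      (hρ1.mul hf1)).mul (hc i))

lemma fderiv_energyFlux (hf : ContDiff ℝ (⊤ : ℕ∞) f) (hu : ContDiff ℝ (⊤ : ℕ∞) u)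
    (hρ : ContDiff ℝ (⊤ : ℕ∞) ρ) (hP : ContDiff ℝ (⊤ : ℕ∞) P) (i : Fin 2) (x v : E2) :
    fderiv ℝ (energyFlux ν f u ρ P i) x v =
      ν * ((fderiv ℝ (fun y => fderiv ℝ u y (EuclideanSpace.single i 1)) x v 0 * u x 0
            + fderiv ℝ u x (EuclideanSpace.single i 1) 0 * fderiv ℝ u x v 0)
          + (fderiv ℝ (fun y => fderiv ℝ u y (EuclideanSpace.single i 1)) x v 1 * u x 1
            + fderiv ℝ u x (EuclideanSpace.single i 1) 1 * fderiv ℝ u x v 1))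
        - ((fderiv ℝ ρ x v * ((u x 0 * u x 0 + u x 1 * u x 1) / 2)
              + ρ x * (u x 0 * fderiv ℝ u x v 0 + u x 1 * fderiv ℝ u x v 1)
              + fderiv ℝ P x v + (fderiv ℝ ρ x v * f x + ρ x * fderiv ℝ f x v)) * u x i
            + (ρ x * ((u x 0 * u x 0 + u x 1 * u x 1) / 2) + P x + ρ x * f x)
              * fderiv ℝ u x v i) := by
  have hcomp : ∀ {w : E2 → E2}, DifferentiableAt ℝ w x → ∀ k : Fin 2,
      HasFDerivAt (fun y => w y k) ((EuclideanSpace.proj k).comp (fderiv ℝ w x)) x :=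
    fun hw k => (EuclideanSpace.proj k : E2 →L[ℝ] ℝ).hasFDerivAt.comp x
      hw.hasFDerivAt
  have hD := hcomp
    ((contDiff_fderiv_apply hu (EuclideanSpace.single i 1)).differentiable one_ne_zero x)
  have hc := hcomp (hu.differentiable (by simp) x)
  have hf' := (hf.differentiable (by simp) x).hasFDerivAt
  have hρ' := (hρ.differentiable (by simp) x).hasFDerivAt
  have hP' := (hP.differentiable (by simp) x).hasFDerivAt
  have h := ((((hD 0).mul (hc 0)).add ((hD 1).mul (hc 1))).const_mul ν).sub
    ((((hρ'.mul ((((hc 0).mul (hc 0)).add ((hc 1).mul (hc 1))).mul_const (1 / 2 : ℝ))).add hP').add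
      (hρ'.mul hf')).mul (hc i))
  have h2 := h.congr_of_eventuallyEq (f₁ := energyFlux ν f u ρ P i) (by
    refine Eventually.of_forall fun y => ?_
    simp only [energyFlux, Pi.add_apply, Pi.sub_apply, Pi.mul_apply]
    ring)
  rw [h2.fderiv]
  simp
  ring

end Flux

/-- Any finite-energy smooth steady state of the inhomogeneous
Navier–Stokes system with gravity `∇f` on a smooth bounded domain `Ω`, with no-slip
boundary condition, has `u ≡ 0` and satisfies the hydrostatic balance `∇P = −ρ ∇f`. -/
theorem steady_state_is_hydrostatic
    (Ω : Set E2) (hΩ : SmoothBoundedDomain Ω)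
    (ν : ℝ) (hν : 0 < ν)
    (f : E2 → ℝ) (hf : ContDiff ℝ (⊤ : ℕ∞) f)
    (u : E2 → E2) (ρ P : E2 → ℝ)
    (hu : ContDiff ℝ (⊤ : ℕ∞) u) (hρ : ContDiff ℝ (⊤ : ℕ∞) ρ) (hP : ContDiff ℝ (⊤ : ℕ∞) P)
    -- momentum equation: ρ (u·∇)u = ν Δu − ∇P − ρ ∇f on Ω
    (hmom : ∀ x ∈ Ω, ρ x • fderiv ℝ u x (u x)
      = ν • vlap u x - gradient P x - ρ x • gradient f x)
    -- transport equation: (u·∇)ρ = 0 on Ω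
    (htrans : ∀ x ∈ Ω, fderiv ℝ ρ x (u x) = 0)
    -- incompressibility: ∇·u = 0 on Ω
    (hdiv : ∀ x ∈ Ω, vdiv u x = 0)
    -- no-slip boundary condition
    (hbc : ∀ x ∈ frontier Ω, u x = 0)
    -- finite energy / integrability for the energy computations
    (hfe₁ : IntegrableOn (fun x => ‖u x‖ ^ 2) Ω)
    (hfe₂ : IntegrableOn (fun x => ‖fderiv ℝ u x‖ ^ 2) Ω)
    (hfe₃ : IntegrableOn (fun x => |ρ x| * ‖u x‖ ^ 2) Ω)
    (hfe₄ : IntegrableOn (fun x => |P x| ^ 2) Ω)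
    (hfe₅ : IntegrableOn (fun x => |ρ x| * |f x|) Ω) :
    (∀ x ∈ Ω, u x = 0) ∧ (∀ x ∈ Ω, gradient P x = -(ρ x • gradient f x)) := by
  have hopen := hΩ.1
  have hD : ∀ v : E2, ∀ k : Fin 2, Continuous fun x => fderiv ℝ u x v k := fun v k =>
    (contDiff_euclidean.1 (contDiff_fderiv_apply hu v) k).continuous
  -- The divergence of the energy flux is `ν |∇u|²` on `Ω`.
  have hpt : ∀ x ∈ Ω, ∑ i : Fin 2,
        fderiv ℝ (energyFlux ν f u ρ P i) x (EuclideanSpace.single i 1)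
      = ν * ∑ i : Fin 2, ∑ k : Fin 2, (fderiv ℝ u x (EuclideanSpace.single i 1) k) ^ 2 := by
    intro x hx
    have m := hmom x hx
    have m0 := congrArg (fun w : E2 => w 0) m
    have m1 := congrArg (fun w : E2 => w 1) m
    have t := htrans x hx
    have d := hdiv x hx
    rw [clm_apply_eq_sum (fderiv ℝ u x) (u x)] at m0 m1
    rw [clm_apply_eq_sum (fderiv ℝ ρ x) (u x)] at t
    simp only [vlap, Fin.sum_univ_two, PiLp.add_apply, PiLp.sub_apply, PiLp.smul_apply, smul_eq_mul,
      gradient_apply_eq] at m0 m1 t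
    simp only [vdiv, Fin.sum_univ_two] at d
    simp only [Fin.sum_univ_two, fderiv_energyFlux hf hu hρ hP]
    linear_combination (-u x 0) * m0 + (-u x 1) * m1
      - ((u x 0 * u x 0 + u x 1 * u x 1) / 2 + f x) * t
      - (ρ x * ((u x 0 * u x 0 + u x 1 * u x 1) / 2) + P x + ρ x * f x) * d
  have hflux0 : ∀ i : Fin 2, ∀ x ∈ frontier Ω, energyFlux ν f u ρ P i x = 0 := by
    intro i x hx
    simp [energyFlux, hbc x hx]
  have hint : ∀ {g : E2 → ℝ}, Continuous g → IntegrableOn g Ω := fun hg =>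
    (hg.continuousOn.integrableOn_compact hΩ.2.1.isCompact_closure).mono_set subset_closure
  have hcont : Continuous fun x => ν * ∑ i : Fin 2, ∑ k : Fin 2,
      (fderiv ℝ u x (EuclideanSpace.single i 1) k) ^ 2 :=
    continuous_const.mul (continuous_finsetSum _ fun i _ => continuous_finsetSum _ fun k _ =>
      (hD _ k).pow 2)
  have hzero : ∫ x in Ω, ν * ∑ i : Fin 2, ∑ k : Fin 2,
      (fderiv ℝ u x (EuclideanSpace.single i 1) k) ^ 2 = 0 := by
    rw [← setIntegral_congr_fun hopen.measurableSet hpt, integral_finsetSum]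
    · exact Finset.sum_eq_zero fun i _ =>
        setIntegral_fderiv_eq_zero hΩ (contDiff_energyFlux hf hu hρ hP i) (hflux0 i) _
    · intro i _
      exact hint (((contDiff_energyFlux hf hu hρ hP i).continuous_fderiv one_ne_zero).clm_apply
        continuous_const)
  have hnn : ∀ x, 0 ≤ ν * ∑ i : Fin 2, ∑ k : Fin 2,
      (fderiv ℝ u x (EuclideanSpace.single i 1) k) ^ 2 := fun x => by positivity
  have hae := (integral_eq_zero_iff_of_nonneg hnn (hint hcont)).1 hzero
  have heq := Measure.eqOn_open_of_ae_eq hae hopen hcont.continuousOn continuousOn_const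
  have hgrad : ∀ x ∈ Ω, fderiv ℝ u x = 0 := by
    intro x hx
    have h := heq hx
    simp only [Pi.zero_apply, mul_eq_zero, hν.ne', false_or] at h
    have hk : ∀ i k : Fin 2, fderiv ℝ u x (EuclideanSpace.single i 1) k = 0 := by
      intro i k
      rw [Finset.sum_eq_zero_iff_of_nonneg (fun i _ => by positivity)] at h
      have h' := h i (Finset.mem_univ i)
      rw [Finset.sum_eq_zero_iff_of_nonneg (fun i _ => by positivity)] at h'
      exact pow_eq_zero_iff two_ne_zero |>.1 (h' k (Finset.mem_univ k))
    ext v k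
    rw [clm_apply_eq_sum]
    simp [hk]
  have hu0 : ∀ x ∈ Ω, u x = 0 := by
    intro x hx
    have hΩuniv : Ω ≠ univ := by
      rintro rfl
      exact NormedSpace.unbounded_univ ℝ E2 hΩ.2.1
    obtain ⟨z, hz, hzd⟩ := exists_mem_frontier_infDist_compl_eq_dist hx hΩuniv
    have hsub : Metric.ball x (dist x z) ⊆ Ω := hzd ▸ Metric.ball_infDist_compl_subset
    have hpos : 0 < dist x z := by
      rw [dist_pos]
      rintro rfl
      exact (hopen.frontier_eq ▸ hz).2 hx
    -- `u` is constant on the open ball around `x` whose closure reaches `z`, where `u` vanishes.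
    have hconst : EqOn u (fun _ => u x) (Metric.ball x (dist x z)) := fun y hy =>
      Metric.isOpen_ball.is_const_of_fderiv_eq_zero (𝕜 := ℝ)
        (convex_ball x (dist x z)).isPreconnected
        (hu.differentiable (by simp)).differentiableOn
        (fun w hw => hgrad w (hsub hw)) hy (Metric.mem_ball_self hpos)
    have hzmem : z ∈ closure (Metric.ball x (dist x z)) := by
      rw [closure_ball x hpos.ne', Metric.mem_closedBall, dist_comm]
    rw [← hbc z hz]
    exact (hconst.closure hu.continuous continuous_const hzmem).symm
  refine ⟨hu0, fun x hx => ?_⟩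
  have hlap : vlap u x = 0 := by
    unfold vlap
    refine Finset.sum_eq_zero fun j _ => ?_
    have hloc : (fun y => fderiv ℝ u y (EuclideanSpace.single j 1)) =ᶠ[𝓝 x] fun _ => (0 : E2) := by
      filter_upwards [hopen.mem_nhds hx] with y hy
      simp [hgrad y hy]
    rw [hloc.fderiv_eq]
    simp
  have m := hmom x hx
  rw [hgrad x hx, hlap] at m
  simp only [_root_.zero_apply, smul_zero, zero_sub] at m
  rw [eq_comm, sub_eq_zero] at m
  rw [← m, neg_neg]
end
end

section
/- Let Ω ⊂ ℝ² be a bounded domain with smooth boundary and let σ : Ω → ℝ satisfy 0 < σ(x) ≤ α₂ < ∞ for all x ∈ Ω. There exists a constant C (depending only on Ω and α₂) such that for every u ∈ H¹₀(Ω) (e.g. every smooth u : Ω → ℝ² vanishing on ∂Ω), the logarithmic interpolation inequality holds: ‖√σ u‖_{L⁴(Ω)}² ≤ C (1 + ‖√σ u‖_{L²(Ω)}) ‖u‖_{H¹(Ω)} √(ln(2 + ‖u‖_{H¹(Ω)}²)). -/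
/-!
The inequality is a consequence of the exponential decay of the distribution function of `|u|`, which
is obtained from the `L¹` Sobolev inequality `‖f‖_{L²} ≤ C ‖∇f‖_{L¹}` in the plane by truncation.

Write `M = ‖u‖²_{H¹}` and `μ(t) = |Ω ∩ {|u| ≥ t}|`. The Sobolev inequality, applied to a smooth cutoff
of `|u|²` between the levels `a < b` (compactly supported in `Ω` since `u` vanishes on `∂Ω`), and
Cauchy–Schwarz give `(b - a)² μ(b) ≤ C μ(a) ∫_{a ≤ |u| < b} |∇u|²` (`level_step`). Taking about
`2 log (2 + M)` equispaced levels and using that the energies of the layers add up to at most `M`,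
one finds a level `T` with `T² ≲ M log (2 + M)` and `μ(T) ≤ |Ω| (2 + M)⁻²` (`trudinger_level`).

The same Sobolev inequality for `|u|²` cut off between `T` and `2T` gives
`∫_{|u| ≥ 2T} |u|⁴ ≲ M ∫_{|u| ≥ T} |u|²` (`quartic_tail`), and the smallness of `μ(T)` bounds the last
integral by a constant (`quartic_tail_log`). Splitting `Ω` at the level `2T` then yields
`∫ σ² |u|⁴ ≤ 4 α₂ T² ∫ σ |u|² + α₂² ∫_{|u| ≥ 2T} |u|⁴ ≲ (1 + ∫ σ |u|²) M log (2 + M)`,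
which is the square of the claim.
-/

open MeasureTheory Real Filter Topology Set
open scoped RealInnerProductSpace

noncomputable section

/-! ### Sobolev inequality for truncations -/

lemma integrableOn_of_bounded {Ω : Set E2} (hb : Bornology.IsBounded Ω) {g : E2 → ℝ}
    (hg : Continuous g) : IntegrableOn g Ω :=
  (hg.continuousOn.integrableOn_compact hb.isCompact_closure).mono_set subset_closure

lemma fderiv_sq_norm_le {u : E2 → E2} {x : E2} (hu : DifferentiableAt ℝ u x) :
    ‖fderiv ℝ (fun y => ‖u y‖ ^ 2) x‖ ≤ 2 * ‖u x‖ * ‖fderiv ℝ u x‖ := by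
  have h := hu.hasFDerivAt.norm_sq
  rw [h.fderiv]
  refine ContinuousLinearMap.opNorm_le_bound _ (by positivity) fun v => ?_
  simp only [two_smul]
  have h1 := norm_inner_le_norm (𝕜 := ℝ) (u x) (fderiv ℝ u x v)
  have h2 := (fderiv ℝ u x).le_opNorm v
  have h3 : ‖u x‖ * ‖fderiv ℝ u x v‖ ≤ ‖u x‖ * (‖fderiv ℝ u x‖ * ‖v‖) := by gcongr
  simp only [add_apply, ContinuousLinearMap.comp_apply, innerSL_apply_apply]
  refine (norm_add_le _ _).trans ?_
  linarith

/-- The Gagliardo–Nirenberg–Sobolev inequality `‖f‖_{L²} ≤ C ‖∇f‖_{L¹}` in the plane, squared and in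
terms of Bochner integrals. -/
lemma gns_plane : ∃ C > (0:ℝ), ∀ f : E2 → ℝ, ContDiff ℝ 1 f → HasCompactSupport f →
    ∫ x, f x ^ 2 ≤ C * (∫ x, ‖fderiv ℝ f x‖) ^ 2 := by
  have hp : NNReal.HolderConjugate (Module.finrank ℝ E2 : NNReal) 2 := by
    rw [finrank_euclideanSpace, Fintype.card_fin]
    exact (NNReal.holderConjugate_iff).2 ⟨by norm_num, by
      rw [← NNReal.coe_inj]; push_cast; norm_num⟩
  refine ⟨(eLpNormLESNormFDerivOneConst (volume : Measure E2) ((2 : NNReal) : ℝ) : ℝ) ^ 2 + 1,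
    by positivity, ?_⟩
  intro f hf hc
  have h := eLpNorm_le_eLpNorm_fderiv_one (volume : Measure E2) hf hc hp
  have hint : Integrable (fderiv ℝ f) :=
    (hf.continuous_fderiv (by norm_num)).integrable_of_hasCompactSupport (hc.fderiv ℝ)
  have hm : MemLp f (2 : NNReal) (volume : Measure E2) :=
    hf.continuous.memLp_of_hasCompactSupport hc
  rw [eLpNorm_one_eq_lintegral_enorm, ← ofReal_integral_norm_eq_lintegral_enorm hint,
    hm.eLpNorm_eq_integral_rpow_norm (by norm_num) (by norm_num),
    ← ENNReal.ofReal_coe_nnreal (p := eLpNormLESNormFDerivOneConst _ _),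
    ← ENNReal.ofReal_mul (by positivity),
    ENNReal.ofReal_le_ofReal_iff (by positivity)] at h
  have hI : ∫ x, ‖f x‖ ^ ((2:NNReal):ENNReal).toReal = ∫ x, f x ^ 2 := by
    congr 1; ext x
    simp
  rw [hI] at h
  have h0 : 0 ≤ ∫ x, f x ^ 2 := by positivity
  have h2 := pow_le_pow_left₀ (by positivity) h 2
  have h3 : ((∫ x, f x ^ 2) ^ ((2:NNReal):ENNReal).toReal⁻¹) ^ 2 = ∫ x, f x ^ 2 := by
    rw [← Real.rpow_natCast, ← Real.rpow_mul h0]; simp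
  rw [h3, mul_pow] at h2
  refine h2.trans ?_
  gcongr
  linarith

/-- The `L¹` Sobolev inequality for truncations `ψ(|u|²)`, where `ψ` vanishes on `(-∞, a²]`. The zero
extension of `u` is in general not `C¹` across `∂Ω`, but that of `ψ(|u|²)` is, because it is supported
in the compact set `{|u| ≥ a} ∩ closure Ω ⊆ Ω`. -/
lemma gns_comp : ∃ C > (0:ℝ), ∀ (Ω : Set E2), IsOpen Ω → Bornology.IsBounded Ω →
    ∀ u : E2 → E2, ContDiff ℝ (⊤ : ℕ∞) u → (∀ x ∈ frontier Ω, u x = 0) →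
    ∀ (ψ : ℝ → ℝ) (a : ℝ), ContDiff ℝ 1 ψ → 0 < a → (∀ s ≤ a ^ 2, ψ s = 0) →
      ∫ x in Ω, ψ (‖u x‖ ^ 2) ^ 2
        ≤ C * (∫ x in Ω, |deriv ψ (‖u x‖ ^ 2)| * (2 * ‖u x‖ * ‖fderiv ℝ u x‖)) ^ 2 := by
  obtain ⟨C, hC, H⟩ := gns_plane
  refine ⟨C, hC, fun Ω ho hb u hu hu0 ψ a hψ ha hψ0 => ?_⟩
  have hu1 : ContDiff ℝ 1 u := hu.of_le (by exact_mod_cast le_top)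
  set g : E2 → ℝ := fun x => ψ (‖u x‖ ^ 2) with hg
  have hgC : ContDiff ℝ 1 g := hψ.comp (hu1.norm_sq ℝ)
  set f : E2 → ℝ := Ω.indicator g with hf
  set K : Set E2 := closure Ω ∩ {x | a ^ 2 ≤ ‖u x‖ ^ 2} with hK
  have hKc : IsClosed K := isClosed_closure.inter
    (isClosed_le continuous_const (by fun_prop))
  have hKcomp : IsCompact K := hb.isCompact_closure.of_isClosed_subset hKc inter_subset_left
  have hKΩ : K ⊆ Ω := by
    rintro x ⟨hx, hx'⟩
    by_contra hn
    have : x ∈ frontier Ω := by rw [ho.frontier_eq]; exact ⟨hx, hn⟩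
    simp only [mem_ofPred_eq, hu0 x this, norm_zero] at hx'
    nlinarith [pow_pos ha 2]
  have hfK : ∀ x ∉ K, f x = 0 := by
    intro x hx
    by_cases hxΩ : x ∈ Ω
    · rw [hf, indicator_of_mem hxΩ]
      apply hψ0
      by_contra hn
      exact hx ⟨subset_closure hxΩ, (not_le.1 hn).le⟩
    · exact indicator_of_notMem hxΩ _
  have heq1 : ∀ x ∈ Ω, f =ᶠ[𝓝 x] g := fun x hx =>
    Filter.eventuallyEq_of_mem (ho.mem_nhds hx) fun y hy => indicator_of_mem hy _
  have heq2 : ∀ x ∉ K, f =ᶠ[𝓝 x] fun _ => 0 := fun x hx =>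
    Filter.eventuallyEq_of_mem (hKc.isOpen_compl.mem_nhds hx) fun y hy => hfK y hy
  have hfC : ContDiff ℝ 1 f := by
    rw [contDiff_iff_contDiffAt]
    intro x
    by_cases hx : x ∈ K
    · exact hgC.contDiffAt.congr_of_eventuallyEq (heq1 x (hKΩ hx))
    · exact contDiffAt_const.congr_of_eventuallyEq (heq2 x hx)
  have hfc : HasCompactSupport f := HasCompactSupport.intro hKcomp hfK
  have h := H f hfC hfc
  have hl : ∫ x, f x ^ 2 = ∫ x in Ω, ψ (‖u x‖ ^ 2) ^ 2 := by
    rw [← integral_indicator ho.measurableSet]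
    congr 1; ext x
    by_cases hx : x ∈ Ω <;> simp [hf, hg, hx]
  have hr : ∫ x, ‖fderiv ℝ f x‖ = ∫ x in Ω, ‖fderiv ℝ g x‖ := by
    rw [← integral_indicator ho.measurableSet]
    congr 1; ext x
    by_cases hx : x ∈ Ω
    · rw [indicator_of_mem hx, (heq1 x hx).fderiv_eq]
    · rw [indicator_of_notMem hx, (heq2 x fun h => hx (hKΩ h)).fderiv_eq]; simp
  rw [hl, hr] at h
  refine h.trans ?_
  have hud : Continuous (fderiv ℝ u) := hu1.continuous_fderiv (by norm_num)
  have huc : Continuous u := hu1.continuous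
  have hψd : Continuous (deriv ψ) := hψ.continuous_deriv (by norm_num)
  gcongr
  · exact integrableOn_of_bounded hb (hgC.continuous_fderiv (by norm_num)).norm
  · exact integrableOn_of_bounded hb (by fun_prop)
  · exact ho.measurableSet.nullMeasurableSet
  · have hd : DifferentiableAt ℝ u x := hu1.differentiable (by norm_num) x
    have : fderiv ℝ g x = deriv ψ (‖u x‖ ^ 2) • fderiv ℝ (fun y => ‖u y‖ ^ 2) x := by
      have h1 : HasDerivAt ψ (deriv ψ (‖u x‖ ^ 2)) (‖u x‖ ^ 2) :=
        (hψ.differentiable (by norm_num) _).hasDerivAt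
      exact (h1.comp_hasFDerivAt x (hd.norm_sq ℝ).hasFDerivAt).fderiv
    simp only [this, norm_smul, Real.norm_eq_abs]
    gcongr
    exact fderiv_sq_norm_le hd

/-- The smooth cutoff has bounded derivative, and the derivative vanishes outside `(0, 1)`; at the end
points this holds because the cutoff attains its extreme values there. -/
lemma smoothTransition_deriv : ∃ D > (0:ℝ), (∀ x, |deriv Real.smoothTransition x| ≤ D) ∧
    (∀ x ≤ 0, deriv Real.smoothTransition x = 0) ∧
    (∀ x ≥ 1, deriv Real.smoothTransition x = 0) := by
  have h0 : ∀ x ≤ 0, deriv Real.smoothTransition x = 0 := fun x hx => by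
    apply IsLocalMin.deriv_eq_zero
    filter_upwards with y
    rw [Real.smoothTransition.zero_of_nonpos hx]; exact Real.smoothTransition.nonneg y
  have h1 : ∀ x ≥ 1, deriv Real.smoothTransition x = 0 := fun x hx => by
    apply IsLocalMax.deriv_eq_zero
    filter_upwards with y
    rw [Real.smoothTransition.one_of_one_le hx]; exact Real.smoothTransition.le_one y
  have hc : Continuous (deriv Real.smoothTransition) :=
    (Real.smoothTransition.contDiff (n := 1)).continuous_deriv (by norm_num)
  obtain ⟨D, hD⟩ := (isCompact_Icc (a := (0:ℝ)) (b := 1)).exists_bound_of_continuousOn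
    hc.continuousOn
  refine ⟨|D| + 1, by positivity, fun x => ?_, h0, h1⟩
  by_cases hx : x ∈ Icc (0:ℝ) 1
  · exact (hD x hx).trans (by linarith [le_abs_self D])
  · rw [mem_Icc, not_and_or, not_le, not_le] at hx
    rcases hx with hx | hx
    · rw [h0 x hx.le]; simp; positivity
    · rw [h1 x hx.le]; simp; positivity

/-- Cauchy–Schwarz, from the sign of the discriminant of `t ↦ ∫ (f + t g)²`. -/
lemma sq_integral_mul_le {S : Set E2} (hb : Bornology.IsBounded S)
    {f g : E2 → ℝ} (hf : Continuous f) (hg : Continuous g) :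
    (∫ x in S, f x * g x) ^ 2 ≤ (∫ x in S, f x ^ 2) * ∫ x in S, g x ^ 2 := by
  have h : ∀ t : ℝ, 0 ≤ (∫ x in S, g x ^ 2) * (t * t) + (2 * ∫ x in S, f x * g x) * t
      + ∫ x in S, f x ^ 2 := by
    intro t
    have : 0 ≤ ∫ x in S, (g x ^ 2 * (t * t) + 2 * (f x * g x) * t + f x ^ 2) :=
      integral_nonneg fun x => by
        have : g x ^ 2 * (t * t) + 2 * (f x * g x) * t + f x ^ 2 = (g x * t + f x) ^ 2 := by ring
        simp only [this]; positivity
    rwa [integral_add, integral_add, integral_mul_const, integral_mul_const,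
      integral_const_mul] at this
    all_goals exact integrableOn_of_bounded hb (by fun_prop)
  have := discrim_le_zero h
  unfold discrim at this
  nlinarith

/-! ### Superlevel sets -/

/-- Passage from the level `a` to the level `b`: the Sobolev inequality for a smooth cutoff of `|u|²`
between `a²` and `b²`, followed by Cauchy–Schwarz on the layer `{a ≤ |u| < b}`. Only the energy of that
layer enters, which is what makes the iteration over levels efficient. -/
lemma level_step : ∃ C > (0:ℝ), ∀ (Ω : Set E2), IsOpen Ω → Bornology.IsBounded Ω →
    ∀ u : E2 → E2, ContDiff ℝ (⊤ : ℕ∞) u → (∀ x ∈ frontier Ω, u x = 0) →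
    ∀ a b : ℝ, 0 < a → a < b →
      (b - a) ^ 2 * volume.real (Ω ∩ {x | b ≤ ‖u x‖})
        ≤ C * (∫ x in Ω ∩ {x | a ≤ ‖u x‖ ∧ ‖u x‖ < b}, ‖fderiv ℝ u x‖ ^ 2)
          * volume.real (Ω ∩ {x | a ≤ ‖u x‖}) := by
  obtain ⟨C, hC, H⟩ := gns_comp
  obtain ⟨D, hD, hDb, hD0, hD1⟩ := smoothTransition_deriv
  refine ⟨C * (2 * D) ^ 2, by positivity, fun Ω ho hb u hu hu0 a b ha hab => ?_⟩
  have hu1 : ContDiff ℝ 1 u := hu.of_le (by exact_mod_cast le_top)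
  have huc : Continuous u := hu1.continuous
  have hud : Continuous (fderiv ℝ u) := hu1.continuous_fderiv (by norm_num)
  have hba : 0 < b - a := sub_pos.2 hab
  have hba2 : 0 < b ^ 2 - a ^ 2 := by nlinarith
  set ψ : ℝ → ℝ := fun s => Real.smoothTransition ((s - a ^ 2) / (b ^ 2 - a ^ 2)) with hψ
  have hψC : ContDiff ℝ 1 ψ :=
    (Real.smoothTransition.contDiff (n := 1)).comp (by fun_prop)
  have hψd : ∀ s, deriv ψ s
      = deriv Real.smoothTransition ((s - a ^ 2) / (b ^ 2 - a ^ 2)) / (b ^ 2 - a ^ 2) := by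
    intro s
    have h1 : HasDerivAt Real.smoothTransition _ ((s - a ^ 2) / (b ^ 2 - a ^ 2)) :=
      ((Real.smoothTransition.contDiff (n := 1)).differentiable (by norm_num) _).hasDerivAt
    have h2 : HasDerivAt (fun s : ℝ => (s - a ^ 2) / (b ^ 2 - a ^ 2)) (1 / (b ^ 2 - a ^ 2)) s :=
      ((hasDerivAt_id s).sub_const _).div_const _
    refine (h1.comp s h2).deriv.trans ?_
    ring
  have h := H Ω ho hb u hu hu0 ψ a hψC ha fun s hs =>
    Real.smoothTransition.zero_of_nonpos (div_nonpos_of_nonpos_of_nonneg (by linarith) hba2.le)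
  set Sa : Set E2 := Ω ∩ {x | a ≤ ‖u x‖} with hSa
  set Sb : Set E2 := Ω ∩ {x | b ≤ ‖u x‖} with hSb
  set R : Set E2 := Ω ∩ {x | a ≤ ‖u x‖ ∧ ‖u x‖ < b} with hR
  have mSb : MeasurableSet Sb :=
    ho.measurableSet.inter (measurableSet_le measurable_const huc.norm.measurable)
  have mR : MeasurableSet R := ho.measurableSet.inter
    ((measurableSet_le measurable_const huc.norm.measurable).inter
      (measurableSet_lt huc.norm.measurable measurable_const))
  have hψc : Continuous ψ := hψC.continuous
  have hψdc : Continuous (deriv ψ) := hψC.continuous_deriv (by norm_num)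
  have bR : Bornology.IsBounded R := hb.subset inter_subset_left
  have hl : volume.real Sb ≤ ∫ x in Ω, ψ (‖u x‖ ^ 2) ^ 2 := by
    have h1 : ∫ x in Sb, ψ (‖u x‖ ^ 2) ^ 2 = ∫ x in Sb, (1:ℝ) := by
      refine setIntegral_congr_fun mSb fun x hx => ?_
      have hx2 : b ≤ ‖u x‖ := hx.2
      have : ψ (‖u x‖ ^ 2) = 1 := Real.smoothTransition.one_of_one_le (by
        rw [le_div_iff₀ hba2]; nlinarith)
      simp [this]
    have h2 : ∫ x in Sb, (1:ℝ) = volume.real Sb := by simp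
    rw [← h2, ← h1]
    exact setIntegral_mono_set (integrableOn_of_bounded hb (by fun_prop))
      (ae_of_all _ fun x => sq_nonneg _) inter_subset_left.eventuallyLE
  have hr : ∫ x in Ω, |deriv ψ (‖u x‖ ^ 2)| * (2 * ‖u x‖ * ‖fderiv ℝ u x‖)
      ≤ 2 * D / (b - a) * ∫ x in R, 1 * ‖fderiv ℝ u x‖ := by
    rw [setIntegral_eq_of_subset_of_forall_sdiff_eq_zero
      (f := fun x => |deriv ψ (‖u x‖ ^ 2)| * (2 * ‖u x‖ * ‖fderiv ℝ u x‖))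
      ho.measurableSet
      (inter_subset_left : R ⊆ Ω), ← integral_const_mul]
    · refine setIntegral_mono_on (integrableOn_of_bounded bR (by fun_prop))
        (integrableOn_of_bounded bR (by fun_prop)) mR fun x hx => ?_
      have hx1 : a ≤ ‖u x‖ := hx.2.1
      have hx2 : ‖u x‖ < b := hx.2.2
      have h1 : |deriv ψ (‖u x‖ ^ 2)| ≤ D / (b ^ 2 - a ^ 2) := by
        rw [hψd, abs_div, abs_of_pos hba2]; gcongr; exact hDb _
      have h2 : D / (b ^ 2 - a ^ 2) * (2 * ‖u x‖) ≤ 2 * D / (b - a) := by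
        rw [div_mul_eq_mul_div, div_le_div_iff₀ hba2 hba]
        have h3 : 0 ≤ (a + b - ‖u x‖) * (2 * D * (b - a)) :=
          mul_nonneg (by linarith) (by positivity)
        nlinarith
      calc |deriv ψ (‖u x‖ ^ 2)| * (2 * ‖u x‖ * ‖fderiv ℝ u x‖)
          ≤ D / (b ^ 2 - a ^ 2) * (2 * ‖u x‖ * ‖fderiv ℝ u x‖) := by gcongr
        _ = D / (b ^ 2 - a ^ 2) * (2 * ‖u x‖) * ‖fderiv ℝ u x‖ := by ring
        _ ≤ 2 * D / (b - a) * (1 * ‖fderiv ℝ u x‖) := by rw [one_mul]; gcongr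
    · rintro x ⟨hx, hx'⟩
      have : deriv ψ (‖u x‖ ^ 2) = 0 := by
        rw [hψd]
        rcases lt_or_ge ‖u x‖ a with h1 | h1
        · rw [hD0, zero_div]
          exact div_nonpos_of_nonpos_of_nonneg (by nlinarith [norm_nonneg (u x)]) hba2.le
        · have h2 : b ≤ ‖u x‖ := by
            by_contra hn
            exact hx' ⟨hx, h1, not_le.1 hn⟩
          rw [hD1, zero_div]
          rw [ge_iff_le, le_div_iff₀ hba2]; nlinarith
      simp [this]
  have hcs := sq_integral_mul_le bR (continuous_const (y := (1:ℝ))) hud.norm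
  have hvol : ∫ x in R, (1:ℝ) ^ 2 = volume.real R := by simp
  rw [hvol] at hcs
  have hRS : volume.real R ≤ volume.real Sa :=
    measureReal_mono (fun x hx => ⟨hx.1, hx.2.1⟩)
      (hb.subset inter_subset_left).measure_lt_top.ne
  have hG : 0 ≤ ∫ x in R, ‖fderiv ℝ u x‖ ^ 2 := by positivity
  calc (b - a) ^ 2 * volume.real Sb
      ≤ (b - a) ^ 2 * (C * (2 * D / (b - a) * ∫ x in R, 1 * ‖fderiv ℝ u x‖) ^ 2) := by
        gcongr
        refine hl.trans (h.trans ?_)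
        gcongr
    _ = C * (2 * D) ^ 2 * (∫ x in R, 1 * ‖fderiv ℝ u x‖) ^ 2 := by field_simp
    _ ≤ C * (2 * D) ^ 2 * (volume.real Sa * ∫ x in R, ‖fderiv ℝ u x‖ ^ 2) := by
        gcongr
        exact hcs.trans (by gcongr)
    _ = _ := by ring

/-- A Ladyzhenskaya-type inequality on superlevel sets: the Sobolev inequality for `|u|²` multiplied by
a smooth cutoff that increases from `0` at `|u| = T` to `1` at `|u| = 2T`. -/
lemma quartic_tail : ∃ C > (0:ℝ), ∀ (Ω : Set E2), IsOpen Ω → Bornology.IsBounded Ω →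
    ∀ u : E2 → E2, ContDiff ℝ (⊤ : ℕ∞) u → (∀ x ∈ frontier Ω, u x = 0) →
    ∀ T : ℝ, 0 < T →
      ∫ x in Ω ∩ {x | 2 * T ≤ ‖u x‖}, ‖u x‖ ^ 4
        ≤ C * (∫ x in Ω ∩ {x | T ≤ ‖u x‖}, ‖u x‖ ^ 2) * ∫ x in Ω, ‖fderiv ℝ u x‖ ^ 2 := by
  obtain ⟨C, hC, H⟩ := gns_comp
  obtain ⟨D, hD, hDb, hD0, hD1⟩ := smoothTransition_deriv
  refine ⟨C * (2 * (1 + 2 * D)) ^ 2, by positivity, fun Ω ho hb u hu hu0 T hT => ?_⟩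
  have hu1 : ContDiff ℝ 1 u := hu.of_le (by exact_mod_cast le_top)
  have huc : Continuous u := hu1.continuous
  have hud : Continuous (fderiv ℝ u) := hu1.continuous_fderiv (by norm_num)
  have hT2 : 0 < 3 * T ^ 2 := by positivity
  set ψ : ℝ → ℝ := fun s => s * Real.smoothTransition ((s - T ^ 2) / (3 * T ^ 2)) with hψ
  have hχC : ContDiff ℝ 1 fun s : ℝ => Real.smoothTransition ((s - T ^ 2) / (3 * T ^ 2)) :=
    (Real.smoothTransition.contDiff (n := 1)).comp (by fun_prop)
  have hψC : ContDiff ℝ 1 ψ := contDiff_id.mul hχC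
  have hψd : ∀ s, deriv ψ s = Real.smoothTransition ((s - T ^ 2) / (3 * T ^ 2))
      + s * (deriv Real.smoothTransition ((s - T ^ 2) / (3 * T ^ 2)) / (3 * T ^ 2)) := by
    intro s
    have h1 : HasDerivAt Real.smoothTransition _ ((s - T ^ 2) / (3 * T ^ 2)) :=
      ((Real.smoothTransition.contDiff (n := 1)).differentiable (by norm_num) _).hasDerivAt
    have h2 : HasDerivAt (fun s : ℝ => (s - T ^ 2) / (3 * T ^ 2)) (1 / (3 * T ^ 2)) s :=
      ((hasDerivAt_id s).sub_const _).div_const _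
    have h3 := (hasDerivAt_id s).mul (h1.comp s h2)
    refine h3.deriv.trans ?_
    simp only [Function.comp, id]
    ring
  have h := H Ω ho hb u hu hu0 ψ T hψC hT fun s hs => by
    have : Real.smoothTransition ((s - T ^ 2) / (3 * T ^ 2)) = 0 :=
      Real.smoothTransition.zero_of_nonpos
        (div_nonpos_of_nonpos_of_nonneg (by linarith) hT2.le)
    simp [hψ, this]
  set S : Set E2 := Ω ∩ {x | T ≤ ‖u x‖} with hS
  set S2 : Set E2 := Ω ∩ {x | 2 * T ≤ ‖u x‖} with hS2
  have mS : MeasurableSet S :=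
    ho.measurableSet.inter (measurableSet_le measurable_const huc.norm.measurable)
  have mS2 : MeasurableSet S2 :=
    ho.measurableSet.inter (measurableSet_le measurable_const huc.norm.measurable)
  have hψc : Continuous ψ := hψC.continuous
  have hψdc : Continuous (deriv ψ) := hψC.continuous_deriv (by norm_num)
  have bS : Bornology.IsBounded S := hb.subset inter_subset_left
  have hl : ∫ x in S2, ‖u x‖ ^ 4 ≤ ∫ x in Ω, ψ (‖u x‖ ^ 2) ^ 2 := by
    have h1 : ∫ x in S2, ψ (‖u x‖ ^ 2) ^ 2 = ∫ x in S2, ‖u x‖ ^ 4 := by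
      refine setIntegral_congr_fun mS2 fun x hx => ?_
      have hx2 : 2 * T ≤ ‖u x‖ := hx.2
      have : Real.smoothTransition ((‖u x‖ ^ 2 - T ^ 2) / (3 * T ^ 2)) = 1 :=
        Real.smoothTransition.one_of_one_le (by
          rw [le_div_iff₀ hT2]; nlinarith)
      simp only [hψ, this]; ring
    rw [← h1]
    exact setIntegral_mono_set (integrableOn_of_bounded hb (by fun_prop))
      (ae_of_all _ fun x => sq_nonneg _) inter_subset_left.eventuallyLE
  have hr : ∫ x in Ω, |deriv ψ (‖u x‖ ^ 2)| * (2 * ‖u x‖ * ‖fderiv ℝ u x‖)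
      ≤ 2 * (1 + 2 * D) * ∫ x in S, ‖u x‖ * ‖fderiv ℝ u x‖ := by
    rw [setIntegral_eq_of_subset_of_forall_sdiff_eq_zero
      (f := fun x => |deriv ψ (‖u x‖ ^ 2)| * (2 * ‖u x‖ * ‖fderiv ℝ u x‖))
      ho.measurableSet
      (inter_subset_left : S ⊆ Ω), ← integral_const_mul]
    · refine setIntegral_mono_on (integrableOn_of_bounded bS (by fun_prop))
        (integrableOn_of_bounded bS (by fun_prop)) mS fun x hx => ?_
      have h2 : |‖u x‖ ^ 2 * (deriv Real.smoothTransition ((‖u x‖ ^ 2 - T ^ 2) / (3 * T ^ 2))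
          / (3 * T ^ 2))| ≤ 2 * D := by
        rcases le_or_gt ‖u x‖ (2 * T) with h3 | h3
        · rw [abs_mul, abs_div, abs_of_pos hT2, abs_of_nonneg (sq_nonneg _), mul_div_assoc',
            div_le_iff₀ hT2]
          have h4 : ‖u x‖ ^ 2 ≤ 4 * T ^ 2 := by nlinarith [norm_nonneg (u x)]
          calc _ ≤ 4 * T ^ 2 * D := by gcongr; exact hDb _
            _ ≤ _ := by nlinarith [mul_pos hD hT2]
        · rw [hD1]
          · simp; positivity
          · rw [ge_iff_le, le_div_iff₀ hT2]; nlinarith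
      have h1 : |deriv ψ (‖u x‖ ^ 2)| ≤ 1 + 2 * D := by
        rw [hψd]
        refine (abs_add_le _ _).trans (add_le_add ?_ h2)
        rw [abs_of_nonneg (Real.smoothTransition.nonneg _)]
        exact Real.smoothTransition.le_one _
      calc |deriv ψ (‖u x‖ ^ 2)| * (2 * ‖u x‖ * ‖fderiv ℝ u x‖)
          ≤ (1 + 2 * D) * (2 * ‖u x‖ * ‖fderiv ℝ u x‖) := by gcongr
        _ = _ := by ring
    · rintro x ⟨hx, hx'⟩
      have h1 : ‖u x‖ < T := by
        by_contra hn
        exact hx' ⟨hx, not_lt.1 hn⟩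
      have h2 : (‖u x‖ ^ 2 - T ^ 2) / (3 * T ^ 2) ≤ 0 :=
        div_nonpos_of_nonpos_of_nonneg (by nlinarith [norm_nonneg (u x)]) hT2.le
      have : deriv ψ (‖u x‖ ^ 2) = 0 := by
        rw [hψd, hD0 _ h2, Real.smoothTransition.zero_of_nonpos h2]; simp
      simp [this]
  have hcs := sq_integral_mul_le bS huc.norm hud.norm
  have hGS : ∫ x in S, ‖fderiv ℝ u x‖ ^ 2 ≤ ∫ x in Ω, ‖fderiv ℝ u x‖ ^ 2 :=
    setIntegral_mono_set (integrableOn_of_bounded hb (by fun_prop))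
      (ae_of_all _ fun x => sq_nonneg _) inter_subset_left.eventuallyLE
  calc ∫ x in S2, ‖u x‖ ^ 4
      ≤ C * (2 * (1 + 2 * D) * ∫ x in S, ‖u x‖ * ‖fderiv ℝ u x‖) ^ 2 := by
        refine hl.trans (h.trans ?_)
        gcongr
    _ = C * (2 * (1 + 2 * D)) ^ 2 * (∫ x in S, ‖u x‖ * ‖fderiv ℝ u x‖) ^ 2 := by ring
    _ ≤ C * (2 * (1 + 2 * D)) ^ 2 * ((∫ x in S, ‖u x‖ ^ 2) * ∫ x in Ω, ‖fderiv ℝ u x‖ ^ 2) := by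
        gcongr
        exact hcs.trans (by gcongr)
    _ = _ := by ring

/-- Iteration of `level_step` over equispaced levels. Each factor `y` is bounded by `exp (e y - 2)`, so
that the product over the layers is controlled by the sum of their energies. -/
lemma level_decay : ∃ c > (0:ℝ), ∀ (Ω : Set E2), IsOpen Ω → Bornology.IsBounded Ω →
    ∀ u : E2 → E2, ContDiff ℝ (⊤ : ℕ∞) u → (∀ x ∈ frontier Ω, u x = 0) →
    ∀ h : ℝ, 0 < h → ∀ k : ℕ,
      volume.real (Ω ∩ {x | (k + 1) * h ≤ ‖u x‖}) ≤ volume.real Ω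
        * exp (exp 1 * (c / h ^ 2)
          * (∫ x in Ω ∩ {x | ‖u x‖ < (k + 1) * h}, ‖fderiv ℝ u x‖ ^ 2) - 2 * k) := by
  obtain ⟨c, hc, H⟩ := level_step
  refine ⟨c, hc, fun Ω ho hb u hu hu0 h hh k => ?_⟩
  have hu1 : ContDiff ℝ 1 u := hu.of_le (by exact_mod_cast le_top)
  have huc : Continuous u := hu1.continuous
  have hud : Continuous (fderiv ℝ u) := hu1.continuous_fderiv (by norm_num)
  induction k with
  | zero =>
    have h1 : volume.real (Ω ∩ {x | ((0:ℕ) + 1 : ℝ) * h ≤ ‖u x‖}) ≤ volume.real Ω :=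
      measureReal_mono inter_subset_left hb.measure_lt_top.ne
    refine h1.trans (le_mul_of_one_le_right (by positivity) (one_le_exp ?_))
    have : 0 ≤ ∫ x in Ω ∩ {x | ‖u x‖ < ((0:ℕ) + 1 : ℝ) * h}, ‖fderiv ℝ u x‖ ^ 2 := by positivity
    have : 0 ≤ exp 1 * (c / h ^ 2)
      * ∫ x in Ω ∩ {x | ‖u x‖ < ((0:ℕ) + 1 : ℝ) * h}, ‖fderiv ℝ u x‖ ^ 2 := by positivity
    simpa using this
  | succ k ih =>
    have hs := H Ω ho hb u hu hu0 ((k + 1) * h) (((k + 1 : ℕ) + 1) * h) (by positivity)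
      (by push_cast; nlinarith)
    have hdiff : ((k + 1 : ℕ) + 1 : ℝ) * h - (k + 1) * h = h := by push_cast; ring
    rw [hdiff] at hs
    set G := ∫ x in Ω ∩ {x | (k + 1) * h ≤ ‖u x‖ ∧ ‖u x‖ < ((k + 1 : ℕ) + 1) * h},
      ‖fderiv ℝ u x‖ ^ 2 with hG
    set A := ∫ x in Ω ∩ {x | ‖u x‖ < (k + 1) * h}, ‖fderiv ℝ u x‖ ^ 2 with hA
    have hsum : ∫ x in Ω ∩ {x | ‖u x‖ < ((k + 1 : ℕ) + 1) * h}, ‖fderiv ℝ u x‖ ^ 2 = A + G := by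
      have hun : Ω ∩ {x | ‖u x‖ < ((k + 1 : ℕ) + 1) * h} = (Ω ∩ {x | ‖u x‖ < (k + 1) * h}) ∪
          (Ω ∩ {x | (k + 1) * h ≤ ‖u x‖ ∧ ‖u x‖ < ((k + 1 : ℕ) + 1) * h}) := by
        ext x
        simp only [mem_inter_iff, mem_union, mem_ofPred_eq]
        have : (k + 1) * h < ((k + 1 : ℕ) + 1) * h := by push_cast; nlinarith
        constructor
        · rintro ⟨h1, h2⟩
          rcases lt_or_ge ‖u x‖ ((k + 1) * h) with h3 | h3
          · exact Or.inl ⟨h1, h3⟩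
          · exact Or.inr ⟨h1, h3, h2⟩
        · rintro (⟨h1, h2⟩ | ⟨h1, h2, h3⟩)
          · exact ⟨h1, h2.trans this⟩
          · exact ⟨h1, h3⟩
      rw [hun, setIntegral_union]
      · rw [Set.disjoint_left]
        rintro x ⟨_, h1⟩ ⟨_, h2, _⟩
        exact absurd h2 (not_le.2 h1)
      · exact ho.measurableSet.inter
          ((measurableSet_le measurable_const huc.norm.measurable).inter
            (measurableSet_lt huc.norm.measurable measurable_const))
      · exact integrableOn_of_bounded (hb.subset inter_subset_left) (by fun_prop)
      · exact integrableOn_of_bounded (hb.subset inter_subset_left) (by fun_prop)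
    rw [hsum]
    have hy : c / h ^ 2 * G ≤ exp (exp 1 * (c / h ^ 2) * G - 2) := by
      have h1 := add_one_le_exp (exp 1 * (c / h ^ 2) * G - 1)
      have h2 : exp (exp 1 * (c / h ^ 2) * G - 1)
          = exp 1 * exp (exp 1 * (c / h ^ 2) * G - 2) := by
        rw [← exp_add]; congr 1; ring
      rw [h2] at h1
      refine le_of_mul_le_mul_left ?_ (exp_pos 1)
      linarith
    have hstep : volume.real (Ω ∩ {x | ((k + 1 : ℕ) + 1) * h ≤ ‖u x‖})
        ≤ c / h ^ 2 * G * volume.real (Ω ∩ {x | (k + 1) * h ≤ ‖u x‖}) := by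
      rw [div_mul_eq_mul_div, div_mul_eq_mul_div, le_div_iff₀ (by positivity)]
      linarith
    calc _ ≤ c / h ^ 2 * G * volume.real (Ω ∩ {x | (k + 1) * h ≤ ‖u x‖}) := hstep
      _ ≤ exp (exp 1 * (c / h ^ 2) * G - 2)
          * (volume.real Ω * exp (exp 1 * (c / h ^ 2) * A - 2 * k)) := by gcongr
      _ = volume.real Ω * (exp (exp 1 * (c / h ^ 2) * G - 2)
          * exp (exp 1 * (c / h ^ 2) * A - 2 * k)) := by ring
      _ = _ := by
        rw [← exp_add]; congr 2; push_cast; ring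

/-- A level `T` of order `√(M log (2 + M))` beyond which `|u|` lives on a set of measure at most
`|Ω| / (2 + M)²`; a weak form of the Trudinger inequality. -/
lemma trudinger_level : ∃ K > (0:ℝ), ∀ (Ω : Set E2), IsOpen Ω → Bornology.IsBounded Ω →
    ∀ u : E2 → E2, ContDiff ℝ (⊤ : ℕ∞) u → (∀ x ∈ frontier Ω, u x = 0) →
    ∀ M : ℝ, 0 < M → ∫ x in Ω, ‖fderiv ℝ u x‖ ^ 2 ≤ M →
      ∃ T > 0, T ^ 2 ≤ K * (M * log (2 + M)) ∧
        (2 + M) ^ 2 * volume.real (Ω ∩ {x | T ≤ ‖u x‖}) ≤ volume.real Ω := by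
  obtain ⟨c, hc, H⟩ := level_decay
  refine ⟨16 * (exp 1 * c), by positivity, fun Ω ho hb u hu hu0 M hM hGM => ?_⟩
  have hu1 : ContDiff ℝ 1 u := hu.of_le (by exact_mod_cast le_top)
  have hud : Continuous (fderiv ℝ u) := hu1.continuous_fderiv (by norm_num)
  have hL : (1:ℝ) / 2 ≤ log (2 + M) := by
    have := log_le_log (by norm_num) (by linarith : (2:ℝ) ≤ 2 + M)
    linarith [log_two_gt_d9]
  -- `N` layers of equal height `h`: the choice `e c M / h² = N` turns the exponent into `N - 2N = -N`,
  -- and `N ≥ 2 log (2 + M)` gives the factor `(2 + M)⁻²`.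
  set N : ℕ := ⌈2 * log (2 + M)⌉₊ with hN
  have hN1 : 2 * log (2 + M) ≤ N := Nat.le_ceil _
  have hN2 : (N:ℝ) < 2 * log (2 + M) + 1 := Nat.ceil_lt_add_one (by linarith)
  have hNpos : (1:ℝ) ≤ N := by linarith
  set h : ℝ := √(exp 1 * c * M / N) with hh
  have hpos : 0 < exp 1 * c * M / N := by positivity
  have hh2 : h ^ 2 = exp 1 * c * M / N := sq_sqrt hpos.le
  have hhpos : 0 < h := sqrt_pos.2 hpos
  refine ⟨(N + 1) * h, by positivity, ?_, ?_⟩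
  · rw [mul_pow, hh2, mul_div_assoc', div_le_iff₀ (by positivity)]
    have h1 : ((N:ℝ) + 1) ^ 2 ≤ 16 * log (2 + M) * N := by nlinarith
    have h2 : 0 ≤ exp 1 * c * M := by positivity
    nlinarith [mul_le_mul_of_nonneg_right h1 h2]
  · have hk := H Ω ho hb u hu hu0 h hhpos N
    have hA : ∫ x in Ω ∩ {x | ‖u x‖ < (N + 1) * h}, ‖fderiv ℝ u x‖ ^ 2 ≤ M :=
      (setIntegral_mono_set (integrableOn_of_bounded hb (by fun_prop))
        (ae_of_all _ fun x => sq_nonneg _) inter_subset_left.eventuallyLE).trans hGM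
    have hE : exp 1 * (c / h ^ 2)
        * (∫ x in Ω ∩ {x | ‖u x‖ < (N + 1) * h}, ‖fderiv ℝ u x‖ ^ 2) - 2 * N
        ≤ -(2 * log (2 + M)) := by
      have h1 : exp 1 * (c / h ^ 2) * M = N := by rw [hh2]; field_simp
      have h2 : exp 1 * (c / h ^ 2)
        * (∫ x in Ω ∩ {x | ‖u x‖ < (N + 1) * h}, ‖fderiv ℝ u x‖ ^ 2) ≤ N :=
        (mul_le_mul_of_nonneg_left hA (by positivity)).trans h1.le
      linarith
    have hlog : exp (-(2 * log (2 + M))) = ((2 + M) ^ 2)⁻¹ := by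
      rw [exp_neg, two_mul, exp_add, exp_log (by linarith), sq]
    have h3 := hk.trans (mul_le_mul_of_nonneg_left (exp_le_exp.2 hE) measureReal_nonneg)
    rw [hlog, ← div_eq_mul_inv, le_div_iff₀ (by positivity)] at h3
    linarith

/-- Beyond a level `2T` with `T² ≲ M log (2 + M)`, the fourth moment of `u` is only linear in `M`. -/
lemma quartic_tail_log : ∃ K > (0:ℝ), ∃ Q > (0:ℝ),
    ∀ (Ω : Set E2), IsOpen Ω → Bornology.IsBounded Ω →
    ∀ u : E2 → E2, ContDiff ℝ (⊤ : ℕ∞) u → (∀ x ∈ frontier Ω, u x = 0) →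
    ∀ M : ℝ, 0 < M → ∫ x in Ω, ‖u x‖ ^ 2 ≤ M → ∫ x in Ω, ‖fderiv ℝ u x‖ ^ 2 ≤ M →
      ∃ T > 0, T ^ 2 ≤ K * (M * log (2 + M)) ∧
        ∫ x in Ω ∩ {x | 2 * T ≤ ‖u x‖}, ‖u x‖ ^ 4 ≤ Q * (volume.real Ω + Q) * M := by
  obtain ⟨K, hK, HK⟩ := trudinger_level
  obtain ⟨Q, hQ, HQ⟩ := quartic_tail
  refine ⟨K, hK, Q, hQ, fun Ω ho hb u hu hu0 M hMpos huM hgM => ?_⟩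
  have hu1 : ContDiff ℝ 1 u := hu.of_le (by exact_mod_cast le_top)
  have huc : Continuous u := hu1.continuous
  have hV0 : 0 ≤ volume.real Ω := measureReal_nonneg
  obtain ⟨T, hT, hT2, hμ⟩ := HK Ω ho hb u hu hu0 M hMpos hgM
  refine ⟨T, hT, hT2, ?_⟩
  set S : Set E2 := Ω ∩ {x | T ≤ ‖u x‖} with hS
  have bS : Bornology.IsBounded S := hb.subset inter_subset_left
  have hq1 := HQ Ω ho hb u hu hu0 T hT
  have hq2 := HQ Ω ho hb u hu hu0 (T / 2) (half_pos hT)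
  rw [mul_div_cancel₀ T (two_ne_zero)] at hq2
  have hS4 : ∫ x in S, ‖u x‖ ^ 4 ≤ Q * M ^ 2 := by
    refine hq2.trans ?_
    have h1 : ∫ x in Ω ∩ {x | T / 2 ≤ ‖u x‖}, ‖u x‖ ^ 2 ≤ M :=
      (setIntegral_mono_set (integrableOn_of_bounded hb (by fun_prop))
        (ae_of_all _ fun x => sq_nonneg _) inter_subset_left.eventuallyLE).trans (by linarith)
    rw [mul_assoc, sq]
    gcongr
  have hSsq : ∫ x in S, ‖u x‖ ^ 2 ≤ volume.real Ω + Q := by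
    -- The Young inequality `|u|² ≤ λ + |u|⁴ / λ` with `λ = (2 + M)²` balances the small measure of `S`
    -- against the fourth moment of size `M²`.
    have h1 : ∫ x in S, ‖u x‖ ^ 2
        ≤ ∫ x in S, ((2 + M) ^ 2 + ((2 + M) ^ 2)⁻¹ * ‖u x‖ ^ 4) := by
      refine integral_mono (integrableOn_of_bounded bS (by fun_prop))
        (integrableOn_of_bounded bS (by fun_prop)) fun x => ?_
      have h2 : 0 < (2 + M) ^ 2 := by positivity
      simp only
      rw [← sub_nonneg]
      have h3 : (2 + M) ^ 2 + ((2 + M) ^ 2)⁻¹ * ‖u x‖ ^ 4 - ‖u x‖ ^ 2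
        = ((2 + M) ^ 2)⁻¹ * (((2 + M) ^ 2 - ‖u x‖ ^ 2 / 2) ^ 2 + 3 / 4 * ‖u x‖ ^ 4) := by
        field_simp; ring
      rw [h3]; positivity
    rw [integral_add (integrableOn_of_bounded bS (by fun_prop))
      (integrableOn_of_bounded bS (by fun_prop)), integral_const_mul] at h1
    have h4 : ∫ x in S, (2 + M) ^ 2 = (2 + M) ^ 2 * volume.real S := by
      simp [mul_comm]
    rw [h4] at h1
    have h5 : ((2 + M) ^ 2)⁻¹ * ∫ x in S, ‖u x‖ ^ 4 ≤ Q := by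
      rw [inv_mul_le_iff₀ (by positivity)]
      refine hS4.trans ?_
      rw [mul_comm]
      gcongr
      linarith
    linarith
  exact hq1.trans (by gcongr)

/-! ### Logarithmic interpolation -/

/-- Logarithmic interpolation inequality:
`‖√σ u‖_{L⁴}² ≤ C (1 + ‖√σ u‖_{L²}) ‖u‖_{H¹} √(ln(2 + ‖u‖_{H¹}²))`
for `u ∈ H¹₀(Ω)` and `0 < σ ≤ α₂` on `Ω`, with `C = C(Ω, α₂)`. -/
theorem log_interpolation_inequality
    (Ω : Set E2) (hΩ : SmoothBoundedDomain Ω)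
    (α₂ : ℝ) (hα₂ : 0 < α₂) :
    ∃ C > (0:ℝ),
      ∀ σ : E2 → ℝ, Measurable σ → (∀ x ∈ Ω, 0 < σ x ∧ σ x ≤ α₂) →
        ∀ u : E2 → E2, ContDiff ℝ (⊤ : ℕ∞) u → (∀ x ∈ frontier Ω, u x = 0) →
          (∫ x in Ω, σ x ^ 2 * ‖u x‖ ^ 4) ^ ((1:ℝ)/2)
            ≤ C * (1 + (∫ x in Ω, σ x * ‖u x‖ ^ 2) ^ ((1:ℝ)/2))
              * (∫ x in Ω, ‖u x‖ ^ 2 + ‖fderiv ℝ u x‖ ^ 2) ^ ((1:ℝ)/2)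
              * Real.sqrt (Real.log (2 + ∫ x in Ω, ‖u x‖ ^ 2 + ‖fderiv ℝ u x‖ ^ 2)) := by
  obtain ⟨ho, hb, -⟩ := hΩ
  obtain ⟨K, hK, Q, hQ, HK⟩ := quartic_tail_log
  set V := volume.real Ω with hV
  have hV0 : 0 ≤ V := measureReal_nonneg
  set B : ℝ := 4 * α₂ * K + 2 * α₂ ^ 2 * (Q * (V + Q)) with hB
  have hBpos : 0 < B := by positivity
  refine ⟨√B, sqrt_pos.2 hBpos, fun σ hσm hσ u hu hu0 => ?_⟩
  have hu1 : ContDiff ℝ 1 u := hu.of_le (by exact_mod_cast le_top)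
  have huc : Continuous u := hu1.continuous
  have hud : Continuous (fderiv ℝ u) := hu1.continuous_fderiv (by norm_num)
  set M := ∫ x in Ω, ‖u x‖ ^ 2 + ‖fderiv ℝ u x‖ ^ 2 with hM
  set A := ∫ x in Ω, σ x * ‖u x‖ ^ 2 with hA
  have hM0 : 0 ≤ M := by positivity
  have hA0 : 0 ≤ A := setIntegral_nonneg ho.measurableSet fun x hx =>
    mul_nonneg (hσ x hx).1.le (by positivity)
  have hL : (1:ℝ) / 2 ≤ log (2 + M) := by
    have := log_le_log (by norm_num) (by linarith : (2:ℝ) ≤ 2 + M)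
    linarith [log_two_gt_d9]
  have hMsum : M = (∫ x in Ω, ‖u x‖ ^ 2) + ∫ x in Ω, ‖fderiv ℝ u x‖ ^ 2 :=
    integral_add (integrableOn_of_bounded hb (by fun_prop))
      (integrableOn_of_bounded hb (by fun_prop))
  have hu0' : 0 ≤ ∫ x in Ω, ‖u x‖ ^ 2 := by positivity
  have hg0' : 0 ≤ ∫ x in Ω, ‖fderiv ℝ u x‖ ^ 2 := by positivity
  have hi1 : IntegrableOn (fun x => σ x * ‖u x‖ ^ 2) Ω := by
    refine Integrable.mono' (integrableOn_of_bounded hb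
      (g := fun x => α₂ * ‖u x‖ ^ 2) (by fun_prop))
      (hσm.mul (huc.norm.pow 2).measurable).aestronglyMeasurable ?_
    filter_upwards [ae_restrict_mem ho.measurableSet] with x hx
    rw [norm_mul, Real.norm_of_nonneg (hσ x hx).1.le, Real.norm_of_nonneg (by positivity)]
    gcongr
    exact (hσ x hx).2
  have hi2 : IntegrableOn (fun x => σ x ^ 2 * ‖u x‖ ^ 4) Ω := by
    refine Integrable.mono' (integrableOn_of_bounded hb
      (g := fun x => α₂ ^ 2 * ‖u x‖ ^ 4) (by fun_prop))
      ((hσm.pow_const 2).mul (huc.norm.pow 4).measurable).aestronglyMeasurable ?_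
    filter_upwards [ae_restrict_mem ho.measurableSet] with x hx
    rw [norm_mul, Real.norm_of_nonneg (by positivity), Real.norm_of_nonneg (by positivity)]
    have := (hσ x hx).1.le
    gcongr
    exact (hσ x hx).2
  have key : ∫ x in Ω, σ x ^ 2 * ‖u x‖ ^ 4 ≤ B * (1 + A) * M * log (2 + M) := by
    rcases hM0.eq_or_lt with hMz | hMpos
    -- `quartic_tail_log` needs `M > 0`; for `M = 0` the field `u` vanishes almost everywhere on `Ω`.
    · have hz : ∫ x in Ω, ‖u x‖ ^ 2 = 0 := by linarith
      rw [integral_eq_zero_iff_of_nonneg (fun x => by positivity)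
        (integrableOn_of_bounded hb (by fun_prop))] at hz
      have : ∫ x in Ω, σ x ^ 2 * ‖u x‖ ^ 4 = 0 := by
        apply integral_eq_zero_of_ae
        filter_upwards [hz] with x hx
        have hx' : ‖u x‖ ^ 2 = 0 := hx
        have : ‖u x‖ = 0 := by simpa using hx'
        simp [this]
      rw [this, ← hMz]; simp
    obtain ⟨T, hT, hT2, hS24⟩ := HK Ω ho hb u hu hu0 M hMpos (by linarith) (by linarith)
    set S2 : Set E2 := Ω ∩ {x | 2 * T ≤ ‖u x‖} with hS2
    have mS2 : MeasurableSet S2 :=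
      ho.measurableSet.inter (measurableSet_le measurable_const huc.norm.measurable)
    have hi3 : IntegrableOn (S2.indicator fun x => ‖u x‖ ^ 4) Ω :=
      (integrableOn_of_bounded hb (by fun_prop)).indicator mS2
    -- Where `|u| < 2T`, one factor `σ |u|²` is at most `4 α₂ T²`; elsewhere `σ ≤ α₂` suffices.
    have hsplit : ∫ x in Ω, σ x ^ 2 * ‖u x‖ ^ 4
        ≤ ∫ x in Ω, (4 * α₂ * T ^ 2 * (σ x * ‖u x‖ ^ 2)
          + α₂ ^ 2 * S2.indicator (fun x => ‖u x‖ ^ 4) x) := by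
      refine setIntegral_mono_on hi2 ((hi1.const_mul _).add (hi3.const_mul _))
        ho.measurableSet fun x hx => ?_
      obtain ⟨h1, h2⟩ := hσ x hx
      by_cases hx2 : 2 * T ≤ ‖u x‖
      · rw [indicator_of_mem (show x ∈ S2 from ⟨hx, hx2⟩)]
        have h3 : σ x ^ 2 * ‖u x‖ ^ 4 ≤ α₂ ^ 2 * ‖u x‖ ^ 4 := by gcongr
        have h4 : 0 ≤ 4 * α₂ * T ^ 2 * (σ x * ‖u x‖ ^ 2) := by positivity
        linarith
      · rw [indicator_of_notMem (fun h => hx2 h.2)]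
        have h3 : ‖u x‖ ^ 2 ≤ 4 * T ^ 2 := by nlinarith [norm_nonneg (u x)]
        have h4 : σ x * ‖u x‖ ^ 2 ≤ α₂ * (4 * T ^ 2) := by gcongr
        have h5 : 0 ≤ σ x * ‖u x‖ ^ 2 := by positivity
        nlinarith [mul_le_mul_of_nonneg_right h4 h5]
    have hind : ∫ x in Ω, S2.indicator (fun x => ‖u x‖ ^ 4) x = ∫ x in S2, ‖u x‖ ^ 4 := by
      rw [setIntegral_indicator mS2, inter_eq_self_of_subset_right inter_subset_left]
    rw [integral_add (hi1.const_mul _) (hi3.const_mul _),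
      integral_const_mul, integral_const_mul, hind] at hsplit
    have hML : M ≤ 2 * (M * log (2 + M)) := by nlinarith
    have hP : 0 ≤ M * log (2 + M) := by positivity
    calc ∫ x in Ω, σ x ^ 2 * ‖u x‖ ^ 4
        ≤ 4 * α₂ * (K * (M * log (2 + M))) * A
          + α₂ ^ 2 * (Q * (V + Q) * (2 * (M * log (2 + M)))) := by
          refine hsplit.trans ?_
          gcongr
          exact hS24.trans (by gcongr)
      _ ≤ B * (1 + A) * (M * log (2 + M)) := by
          have h1 : 0 ≤ 4 * α₂ * K * (M * log (2 + M)) := by positivity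
          have h2 : 0 ≤ 2 * α₂ ^ 2 * (Q * (V + Q)) * A * (M * log (2 + M)) := by positivity
          rw [hB]
          linear_combination h1 + h2
      _ = _ := by ring
  simp only [← Real.sqrt_eq_rpow]
  have hAs : 1 + A ≤ (1 + √A) ^ 2 := by
    nlinarith [sq_sqrt hA0, sqrt_nonneg A]
  calc √(∫ x in Ω, σ x ^ 2 * ‖u x‖ ^ 4)
      ≤ √(B * (1 + √A) ^ 2 * M * log (2 + M)) := by
        apply sqrt_le_sqrt
        refine key.trans ?_
        have : 0 ≤ log (2 + M) := by linarith
        gcongr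
    _ = √B * (1 + √A) * √M * √(log (2 + M)) := by
        rw [sqrt_mul (by positivity), sqrt_mul (by positivity), sqrt_mul (by positivity),
          sqrt_sq (by positivity)]
end
end
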